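/- arXiv:2210.16153 — 3 statements merged into one kernel-verified Lean document; each statement's English description precedes it below -/
import Mathlib

section
/- Let q > 1 be a real number and λ a real number. Define the coefficient families of the skew-q-powers of μ(X,Y;λ) = X + (q^λ − 1)Y by μ^{[1]}_0(λ) = 1, μ^{[1]}_1(λ) = q^λ − 1, μ^{[1]}_u(λ) = 0 for u ≥ 2, and recursively μ^{[k+1]}_u(λ) = Σ_{j=0}^{u} q^{2jk} · μ^{[1]}_j(λ) · μ^{[k]}_{u−j}(λ − 2j) (the skew-q-product of the degree-1 family μ^{[1]} with the degree-k family μ^{[k]}). Then for every integer k ≥ 1 and every 0 ≤ u ≤ k, μ^{[k]}_u(λ) = [k;u] · γ(λ,u); that is, μ^{[k]}(X,Y;λ) = Σ_{u=0}^{k} [k;u] γ(λ,u) Y^u X^{k−u}. -/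
/-- The skew-q-nary Gaussian coefficient `[x;k]` for real `x`. -/
noncomputable def gaussQ (q x : ℝ) (k : ℕ) : ℝ :=
  ∏ i ∈ Finset.range k, (q ^ (2 * x) - q ^ (2 * (i : ℝ))) / (q ^ (2 * (k : ℝ)) - q ^ (2 * (i : ℝ)))

/-- The skew-q-nary Gamma function `γ(x,k)`. -/
noncomputable def skewGamma (q x : ℝ) (k : ℕ) : ℝ :=
  ∏ i ∈ Finset.range k, (q ^ x - q ^ (2 * (i : ℝ)))

/-- The coefficient family of `μ(X,Y;λ) = X + (q^λ − 1)Y`. -/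
noncomputable def mu1 (q : ℝ) : ℕ → ℝ → ℝ
  | 0 => fun _ => 1
  | 1 => fun lam => q ^ lam - 1
  | _ + 2 => fun _ => 0

/-- The coefficient families of the skew-q-powers `μ^{[k]}`, built recursively by the
skew-q-product of `μ^{[1]}` (degree 1) with `μ^{[k]}` (degree k). -/
noncomputable def muPow (q : ℝ) : ℕ → ℕ → ℝ → ℝ
  | 0 => fun u _ => if u = 0 then 1 else 0
  | 1 => fun u lam => mu1 q u lam
  | k + 2 => fun u lam =>
      ∑ j ∈ Finset.range (u + 1),
        q ^ (2 * j * (k + 1)) * mu1 q j lam * muPow q (k + 1) (u - j) (lam - 2 * (j : ℝ))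

/-!
Since `μ^{[1]}` has only two nonzero coefficients, the skew-`q`-product with it is a two-term
recursion in `u`. As `q^λ − q^{2(i+1)} = q^2 (q^{λ−2} − q^{2i})`, the product `γ(λ,u+1)` equals
`(q^λ − 1) q^{2u} γ(λ−2,u)`; dividing by it turns the recursion into the `q`-Pascal rule. The
Gaussian coefficient is itself a quotient of `γ`s, `[x;k] = γ(2x,k) / γ(2k,k)`, so the Pascal rule
comes from the same shift, and it holds for real `x`.
-/

theorem skewGamma_zero_right (q x : ℝ) : skewGamma q x 0 = 1 :=
  Finset.prod_range_zero _

theorem skewGamma_succ (q x : ℝ) (k : ℕ) :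
    skewGamma q x (k + 1) = skewGamma q x k * (q ^ x - q ^ (2 * (k : ℝ))) :=
  Finset.prod_range_succ _ _

theorem skewGamma_add_two_succ {q : ℝ} (hq : 0 < q) (x : ℝ) (k : ℕ) :
    skewGamma q (x + 2) (k + 1) = (q ^ (x + 2) - 1) * (q ^ (2 * (k : ℝ)) * skewGamma q x k) := by
  induction k with
  | zero => simp [skewGamma_succ, skewGamma_zero_right]
  | succ k ih =>
    have shift : q ^ (2 * ((k + 1 : ℕ) : ℝ)) = q ^ (2 * (k : ℝ)) * q ^ (2 : ℝ) := by
      rw [← Real.rpow_add hq, Nat.cast_succ, mul_add_one]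
    rw [skewGamma_succ, ih, skewGamma_succ q x, shift, Real.rpow_add hq x]
    ring

theorem skewGamma_two_mul_self_ne_zero {q : ℝ} (hq₀ : 0 < q) (hq₁ : q ≠ 1) (k : ℕ) :
    skewGamma q (2 * k) k ≠ 0 := by
  refine Finset.prod_ne_zero_iff.2 fun i hi => sub_ne_zero.2 fun h => ?_
  have hki : (k : ℝ) = i := mul_left_cancel₀ two_ne_zero ((Real.rpow_right_inj hq₀ hq₁).1 h)
  exact (Finset.mem_range.1 hi).ne' (Nat.cast_injective hki)

theorem gaussQ_eq_skewGamma_div (q x : ℝ) (k : ℕ) :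
    gaussQ q x k = skewGamma q (2 * x) k / skewGamma q (2 * k) k :=
  Finset.prod_div_distrib ..

theorem gaussQ_zero_right (q x : ℝ) : gaussQ q x 0 = 1 :=
  Finset.prod_range_zero _

theorem gaussQ_zero_succ (q : ℝ) (k : ℕ) : gaussQ q 0 (k + 1) = 0 :=
  Finset.prod_eq_zero (Finset.mem_range.2 k.succ_pos) (by simp)

theorem gaussQ_add_one_succ {q : ℝ} (hq₀ : 0 < q) (hq₁ : q ≠ 1) (x : ℝ) (k : ℕ) :
    gaussQ q (x + 1) (k + 1) = gaussQ q x (k + 1) + q ^ (2 * (x - k)) * gaussQ q x k := by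
  have shift (y : ℝ) : skewGamma q (2 * (y + 1)) (k + 1) =
      (q ^ (2 * y + 2) - 1) * (q ^ (2 * (k : ℝ)) * skewGamma q (2 * y) k) := by
    rw [mul_add_one, skewGamma_add_two_succ hq₀]
  have numerator : skewGamma q (2 * (x + 1)) (k + 1) = skewGamma q (2 * x) (k + 1) +
      (q ^ (2 * (k : ℝ) + 2) - 1) * (q ^ (2 * x) * skewGamma q (2 * x) k) := by
    rw [shift, skewGamma_succ, Real.rpow_add hq₀, Real.rpow_add hq₀]
    ring
  have factor_ne_zero : q ^ (2 * (k : ℝ) + 2) - 1 ≠ 0 := by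
    have h := skewGamma_two_mul_self_ne_zero hq₀ hq₁ (k + 1)
    rw [Nat.cast_succ, shift] at h
    exact left_ne_zero_of_mul h
  rw [gaussQ_eq_skewGamma_div, numerator, add_div, ← gaussQ_eq_skewGamma_div, Nat.cast_succ,
    shift, mul_div_mul_left _ _ factor_ne_zero, mul_div_mul_comm, ← gaussQ_eq_skewGamma_div,
    mul_sub, Real.rpow_sub hq₀]

theorem muPow_zero_right (q : ℝ) (k : ℕ) (lam : ℝ) : muPow q k 0 lam = 1 := by
  induction k with
  | zero => simp [muPow]
  | succ k ih => cases k <;> simp_all [muPow, mu1]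

theorem muPow_succ_succ (q : ℝ) (k u : ℕ) (lam : ℝ) :
    muPow q (k + 1) (u + 1) lam =
      muPow q k (u + 1) lam + q ^ (2 * k) * (q ^ lam - 1) * muPow q k u (lam - 2) := by
  cases k with
  | zero => cases u <;> simp [muPow, mu1]
  | succ k =>
    simp only [muPow]
    rw [Finset.sum_range_succ', Finset.sum_range_succ']
    simp [mu1, add_comm]

theorem stmt0_general {q : ℝ} (hq₀ : 0 < q) (hq₁ : q ≠ 1) (lam : ℝ) (k u : ℕ) :
    muPow q k u lam = gaussQ q k u * skewGamma q lam u := by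
  induction k generalizing u lam with
  | zero =>
    cases u with
    | zero => simp [muPow, gaussQ_zero_right, skewGamma_zero_right]
    | succ u => simp [muPow, gaussQ_zero_succ]
  | succ k ih =>
    cases u with
    | zero => simp [muPow_zero_right, gaussQ_zero_right, skewGamma_zero_right]
    | succ u =>
      have hγ : skewGamma q lam (u + 1) =
          (q ^ lam - 1) * (q ^ (2 * (u : ℝ)) * skewGamma q (lam - 2) u) := by
        simpa only [sub_add_cancel] using skewGamma_add_two_succ hq₀ (lam - 2) u
      have hpow : q ^ (2 * k) = q ^ (2 * ((k : ℝ) - u)) * q ^ (2 * (u : ℝ)) := by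
        rw [← Real.rpow_add hq₀, ← mul_add, sub_add_cancel]
        exact_mod_cast (Real.rpow_natCast q (2 * k)).symm
      rw [muPow_succ_succ, ih, ih, Nat.cast_succ, gaussQ_add_one_succ hq₀ hq₁, hγ, hpow]
      ring

theorem stmt0 (q : ℝ) (hq : 1 < q) (lam : ℝ) (k : ℕ) (hk : 1 ≤ k) (u : ℕ) (hu : u ≤ k) :
    muPow q k u lam = gaussQ q (k : ℝ) u * skewGamma q lam u :=
  stmt0_general (zero_lt_one.trans hq) hq.ne' lam k u
end

section
/- Let q > 1 be a real number and m a real number. For all naturals n and x, k with 0 ≤ x ≤ n and 0 ≤ k ≤ n, the skew-q-Krawtchouk polynomial coincides with the generalised Krawtchouk polynomial: Σ_{j=0}^{k} (−1)^j q^{2j(n−x)} q^{j(j−1)} [x;j] [n−x;k−j] γ(m−2j, k−j) = Σ_{j=0}^{k} (−1)^{k−j} q^{(k−j)(k−j−1)} [n−j; n−k] [n−x; j] q^{jm}. -/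
/-!
Let `Q = q ^ 2` and write `(a ⊖ b)_k` for `∏_{i < k} (a - Q ^ i * b)`. Since
`a - Q ^ (i + j) * c = (a - Q ^ i * b) + Q ^ i * (b - Q ^ j * c)`, Pascal's rule gives
`(a ⊖ c)_n = ∑ [n;i] (a ⊖ b)_i (b ⊖ c)_(n - i)`. For `b = 0` this is the `Q`-binomial theorem, which
expands `γ(m - 2j, k - j)` in powers of `q ^ m`; for `a = Q ^ (x + y)`, `b = Q ^ y`, `c = 1` it is
the `Q`-Vandermonde identity. With `y = n - x`, the rule `[y;l+s] [l+s;l] = [y;l] [y-l;s]` turns the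
coefficient of `q ^ (l * m)` in the skew-`q`-Krawtchouk polynomial into a `Q`-Vandermonde sum.
-/

open Finset

lemma sum_antidiagonal_antidiagonal_left_comm {A M : Type*} [AddCommMonoid A] [HasAntidiagonal A]
    [AddCommMonoid M] (f : A → A → A → M) (n : A) :
    ∑ p ∈ antidiagonal n, ∑ r ∈ antidiagonal p.2, f p.1 r.1 r.2
      = ∑ p ∈ antidiagonal n, ∑ r ∈ antidiagonal p.2, f r.1 p.1 r.2 := by
  rw [sum_sigma', sum_sigma']
  refine sum_nbij' (fun s => ⟨(s.2.1, s.1.1 + s.2.2), (s.1.1, s.2.2)⟩)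
    (fun s => ⟨(s.2.1, s.1.1 + s.2.2), (s.1.1, s.2.2)⟩) ?_ ?_ ?_ ?_ ?_ <;>
    rintro ⟨⟨_, _⟩, _, _⟩ <;>
    grind [HasAntidiagonal.mem_antidiagonal]

/-- The `Q`-analogue `(a - b)(a - Q b) ⋯ (a - Q ^ (k - 1) b)` of the power `(a - b) ^ k`. Keeping
`a` and `b` independent lets it cover the Gamma function (`b = 1`), the monomials `a ^ k` (`b = 0`)
and the signed powers `(-1) ^ k * Q ^ (k.choose 2)` (`a = 0`, `b = 1`). -/
def qSubPow {R : Type*} [CommRing R] (Q a b : R) (k : ℕ) : R :=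
  ∏ i ∈ range k, (a - Q ^ i * b)

/-- The Gaussian coefficient `[x;k]` with base `Q`, as a function of `a = Q ^ x` rather than of `x`,
so that `x` need not be a natural number. The division is meaningful only when `Q ^ k ≠ Q ^ i` for
all `i < k`. -/
def gaussBinom {K : Type*} [Field K] (Q a : K) (k : ℕ) : K :=
  qSubPow Q a 1 k / qSubPow Q (Q ^ k) 1 k

section qSubPow

variable {R : Type*} [CommRing R] (Q a b c : R)

@[simp]
lemma qSubPow_zero : qSubPow Q a b 0 = 1 :=
  prod_range_zero _

lemma qSubPow_succ (k : ℕ) : qSubPow Q a b (k + 1) = qSubPow Q a b k * (a - Q ^ k * b) :=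
  prod_range_succ _ _

lemma qSubPow_add (k l : ℕ) :
    qSubPow Q a b (k + l) = qSubPow Q a b k * qSubPow Q a (Q ^ k * b) l := by
  simp only [qSubPow, prod_range_add, pow_add, mul_comm (Q ^ k), mul_assoc]

lemma qSubPow_mul_mul (k : ℕ) : qSubPow Q (c * a) (c * b) k = c ^ k * qSubPow Q a b k := by
  simp_rw [qSubPow, mul_left_comm _ c, ← mul_sub, prod_mul_distrib, prod_const, card_range]

lemma qSubPow_zero_right (k : ℕ) : qSubPow Q a 0 k = a ^ k := by
  simp [qSubPow]

lemma qSubPow_mul_left_succ (k : ℕ) :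
    qSubPow Q (Q * a) b (k + 1) = (Q * a - b) * Q ^ k * qSubPow Q a b k := by
  rw [add_comm, qSubPow_add, pow_one, qSubPow_mul_mul, mul_assoc]
  simp [qSubPow]

lemma qSubPow_zero_one_add (k l : ℕ) :
    qSubPow Q 0 1 (k + l) = qSubPow Q 0 1 k * Q ^ (k * l) * qSubPow Q 0 1 l := by
  have h := qSubPow_mul_mul Q 0 1 (Q ^ k) l
  rw [mul_zero] at h
  rw [qSubPow_add, h, ← pow_mul, mul_assoc]

lemma qSubPow_sq_zero_one (q : R) (k : ℕ) :
    qSubPow (q ^ 2) 0 1 k = (-1) ^ k * q ^ (k * (k - 1)) := by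
  simp only [qSubPow, zero_sub, mul_one, prod_neg, card_range, ← pow_mul]
  rw [prod_pow_eq_pow_sum, ← mul_sum, mul_comm 2, sum_range_id_mul_two]

lemma qSubPow_pow_eq_zero {n k : ℕ} (h : n < k) : qSubPow Q (Q ^ n) 1 k = 0 :=
  prod_eq_zero (mem_range.2 h) (by rw [mul_one, sub_self])

lemma qSubPow_pow_add_self (k l : ℕ) :
    qSubPow Q (Q ^ (k + l)) 1 (k + l)
      = qSubPow Q (Q ^ (k + l)) 1 k * (Q ^ (k * l) * qSubPow Q (Q ^ l) 1 l) := by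
  rw [qSubPow_add, pow_add, qSubPow_mul_mul, pow_mul]

end qSubPow

section gaussBinom

variable {K : Type*} [Field K] {Q : K}

lemma ne_zero_of_injective_pow (hQ : Function.Injective (Q ^ · : ℕ → K)) : Q ≠ 0 := by
  rintro rfl
  exact absurd (hQ (by simp : (0 : K) ^ 1 = 0 ^ 2)) (by decide)

lemma qSubPow_pow_self_ne_zero (hQ : Function.Injective (Q ^ · : ℕ → K)) (k : ℕ) :
    qSubPow Q (Q ^ k) 1 k ≠ 0 := by
  refine prod_ne_zero_iff.2 fun i hi => ?_
  rw [mul_one]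
  exact sub_ne_zero.2 (hQ.ne (mem_range.1 hi).ne')

@[simp]
lemma gaussBinom_zero_right (Q a : K) : gaussBinom Q a 0 = 1 := by
  simp [gaussBinom]

lemma gaussBinom_mul_left_succ (hQ : Function.Injective (Q ^ · : ℕ → K)) (a : K) (k : ℕ) :
    gaussBinom Q (Q * a) (k + 1) = gaussBinom Q a k + Q ^ (k + 1) * gaussBinom Q a (k + 1) := by
  have hk := qSubPow_pow_self_ne_zero hQ k
  have hk' := qSubPow_pow_self_ne_zero hQ (k + 1)
  rw [pow_succ' Q, qSubPow_mul_left_succ, ← pow_succ' Q] at hk'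
  obtain ⟨h₁, h₂⟩ := mul_ne_zero_iff.1 (left_ne_zero_of_mul hk')
  simp_rw [gaussBinom, qSubPow_mul_left_succ, pow_succ' Q k, qSubPow_mul_left_succ, qSubPow_succ,
    ← pow_succ' Q k]
  field_simp
  ring

lemma gaussBinom_pow_add (hQ : Function.Injective (Q ^ · : ℕ → K)) (k l : ℕ) :
    gaussBinom Q (Q ^ (k + l)) k = qSubPow Q (Q ^ (k + l)) 1 (k + l) /
      (qSubPow Q (Q ^ k) 1 k * (Q ^ (k * l) * qSubPow Q (Q ^ l) 1 l)) := by
  have hl := qSubPow_pow_self_ne_zero hQ l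
  have hQ₀ := ne_zero_of_injective_pow hQ
  rw [qSubPow_pow_add_self, gaussBinom,
    mul_div_mul_right _ _ (mul_ne_zero (pow_ne_zero _ hQ₀) hl)]

lemma gaussBinom_pow_add_symm (hQ : Function.Injective (Q ^ · : ℕ → K)) (k l : ℕ) :
    gaussBinom Q (Q ^ (k + l)) k = gaussBinom Q (Q ^ (k + l)) l := by
  rw [gaussBinom_pow_add hQ, add_comm k l, gaussBinom_pow_add hQ]
  congr 1
  ring

lemma gaussBinom_mul_gaussBinom_pow (hQ : Function.Injective (Q ^ · : ℕ → K)) (a : K) (k l : ℕ) :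
    gaussBinom Q a (k + l) * gaussBinom Q (Q ^ (k + l)) k
      = gaussBinom Q a k * gaussBinom Q (a / Q ^ k) l := by
  have hQk : Q ^ k ≠ 0 := pow_ne_zero _ (ne_zero_of_injective_pow hQ)
  have h := qSubPow_mul_mul Q (a / Q ^ k) 1 (Q ^ k) l
  rw [mul_div_cancel₀ a hQk, ← pow_mul] at h
  rw [gaussBinom_pow_add hQ, gaussBinom, gaussBinom, gaussBinom, qSubPow_add Q a, h]
  have := qSubPow_pow_self_ne_zero hQ (k + l)
  have := qSubPow_pow_self_ne_zero hQ k
  have := qSubPow_pow_self_ne_zero hQ l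
  have := pow_ne_zero l hQk
  rw [← pow_mul] at this
  field_simp

theorem qSubPow_eq_sum (hQ : Function.Injective (Q ^ · : ℕ → K)) (a b c : K) (n : ℕ) :
    qSubPow Q a c n = ∑ p ∈ antidiagonal n,
      gaussBinom Q (Q ^ n) p.1 * qSubPow Q a b p.1 * qSubPow Q b c p.2 := by
  induction n with
  | zero => simp
  | succ n ih =>
    have hsplit (i j : ℕ) (hij : i + j = n) :
        a - Q ^ n * c = (a - Q ^ i * b) + Q ^ i * (b - Q ^ j * c) := by
      rw [← hij, pow_add]; ring
    have hshift : ∑ p ∈ antidiagonal n,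
          Q ^ p.1 * gaussBinom Q (Q ^ n) p.1 * qSubPow Q a b p.1 * qSubPow Q b c (p.2 + 1)
        = qSubPow Q b c (n + 1) + ∑ p ∈ antidiagonal n, Q ^ (p.1 + 1) *
            gaussBinom Q (Q ^ n) (p.1 + 1) * qSubPow Q a b (p.1 + 1) * qSubPow Q b c p.2 := by
      have h := Nat.sum_antidiagonal_succ (n := n) (f := fun p =>
        Q ^ p.1 * gaussBinom Q (Q ^ n) p.1 * qSubPow Q a b p.1 * qSubPow Q b c p.2)
      rw [Nat.sum_antidiagonal_succ'] at h
      simpa [gaussBinom, qSubPow_pow_eq_zero Q n.lt_succ_self] using h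
    calc qSubPow Q a c (n + 1)
        = ∑ p ∈ antidiagonal n,
              gaussBinom Q (Q ^ n) p.1 * qSubPow Q a b (p.1 + 1) * qSubPow Q b c p.2
            + ∑ p ∈ antidiagonal n,
              Q ^ p.1 * gaussBinom Q (Q ^ n) p.1 * qSubPow Q a b p.1 * qSubPow Q b c (p.2 + 1) := by
          rw [qSubPow_succ, ih, sum_mul, ← sum_add_distrib]
          refine sum_congr rfl fun p hp => ?_
          rw [hsplit p.1 p.2 (mem_antidiagonal.1 hp), qSubPow_succ, qSubPow_succ]
          ring
      _ = qSubPow Q b c (n + 1) + ∑ p ∈ antidiagonal n,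
            gaussBinom Q (Q ^ (n + 1)) (p.1 + 1) * qSubPow Q a b (p.1 + 1) * qSubPow Q b c p.2 := by
          rw [hshift, add_left_comm, ← sum_add_distrib]
          simp_rw [pow_succ' Q n, gaussBinom_mul_left_succ hQ, add_mul]
      _ = _ := by simp [Nat.sum_antidiagonal_succ]

theorem qSubPow_one_eq_sum_pow (hQ : Function.Injective (Q ^ · : ℕ → K)) (t : K) (n : ℕ) :
    qSubPow Q t 1 n = ∑ p ∈ antidiagonal n,
      gaussBinom Q (Q ^ n) p.1 * t ^ p.1 * qSubPow Q 0 1 p.2 := by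
  simpa only [qSubPow_zero_right] using qSubPow_eq_sum hQ t 0 1 n

theorem gaussBinom_mul_eq_sum (hQ : Function.Injective (Q ^ · : ℕ → K)) (a b : K) (n : ℕ) :
    gaussBinom Q (a * b) n = ∑ p ∈ antidiagonal n,
      (b / Q ^ p.2) ^ p.1 * gaussBinom Q a p.1 * gaussBinom Q b p.2 := by
  rw [gaussBinom, qSubPow_eq_sum hQ _ b, sum_div]
  refine sum_congr rfl fun ⟨k, l⟩ hp => ?_
  obtain rfl : k + l = n := mem_antidiagonal.1 hp
  have hb : qSubPow Q (a * b) b k = b ^ k * qSubPow Q a 1 k := by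
    simpa only [mul_comm b, one_mul] using qSubPow_mul_mul Q a 1 b k
  have := ne_zero_of_injective_pow hQ
  have := qSubPow_pow_self_ne_zero hQ (k + l)
  have := qSubPow_pow_self_ne_zero hQ k
  have := qSubPow_pow_self_ne_zero hQ l
  rw [gaussBinom_pow_add hQ, hb, gaussBinom, gaussBinom, div_pow, ← pow_mul, mul_comm l k]
  field_simp

/-- The paper's sums are recovered with `Q = q ^ 2`, `a = Q ^ x`, `b = Q ^ (n - x)`, `t = q ^ m`. -/
theorem krawtchouk_eq_generalisedKrawtchouk (hQ : Function.Injective (Q ^ · : ℕ → K)) (a b t : K)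
    (k : ℕ) :
    ∑ p ∈ antidiagonal k, b ^ p.1 * qSubPow Q 0 1 p.1 * gaussBinom Q a p.1 * gaussBinom Q b p.2 *
        qSubPow Q (t / Q ^ p.1) 1 p.2
      = ∑ p ∈ antidiagonal k, qSubPow Q 0 1 p.2 * gaussBinom Q (a * b / Q ^ p.1) p.2 *
          gaussBinom Q b p.1 * t ^ p.1 := by
  have hQ₀ := ne_zero_of_injective_pow hQ
  simp_rw [qSubPow_one_eq_sum_pow hQ (_ / _), mul_div_assoc a, gaussBinom_mul_eq_sum hQ a,
    mul_sum, sum_mul]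
  let f (j l s : ℕ) : K := b ^ j * qSubPow Q 0 1 j * gaussBinom Q a j * gaussBinom Q b (l + s) *
    (gaussBinom Q (Q ^ (l + s)) l * (t / Q ^ j) ^ l * qSubPow Q 0 1 s)
  calc
    _ = ∑ p ∈ antidiagonal k, ∑ r ∈ antidiagonal p.2, f p.1 r.1 r.2 := by
      refine sum_congr rfl fun p _ => sum_congr rfl fun r hr => ?_
      rw [← mem_antidiagonal.1 hr]
    _ = ∑ p ∈ antidiagonal k, ∑ r ∈ antidiagonal p.2, f r.1 p.1 r.2 :=
      sum_antidiagonal_antidiagonal_left_comm f k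
    _ = _ := by
      refine sum_congr rfl fun ⟨l, _⟩ _ => sum_congr rfl fun ⟨j, s⟩ hjs => ?_
      obtain rfl := mem_antidiagonal.1 hjs
      have hmul := gaussBinom_mul_gaussBinom_pow hQ b l s
      have hpow : b ^ j * (t / Q ^ j) ^ l = Q ^ (j * s) * (b / Q ^ l / Q ^ s) ^ j * t ^ l := by
        simp_rw [div_pow, ← pow_mul, mul_comm s j, mul_comm l j]
        field_simp
      simp only [f, qSubPow_zero_one_add]
      linear_combination qSubPow Q 0 1 j * gaussBinom Q a j * qSubPow Q 0 1 s *
        (b ^ j * (t / Q ^ j) ^ l * hmul + gaussBinom Q b l * gaussBinom Q (b / Q ^ l) s * hpow)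

end gaussBinom

section Real

variable {q : ℝ}

lemma rpow_two_mul_natCast (hq : 0 < q) (n : ℕ) : q ^ (2 * (n : ℝ)) = (q ^ 2) ^ n := by
  rw [Real.rpow_mul hq.le, Real.rpow_natCast, Real.rpow_two]

lemma skewGamma_eq_qSubPow (hq : 0 < q) (x : ℝ) (k : ℕ) :
    skewGamma q x k = qSubPow (q ^ 2) (q ^ x) 1 k := by
  simp_rw [skewGamma, qSubPow, rpow_two_mul_natCast hq, mul_one]

lemma gaussQ_eq_gaussBinom (hq : 0 < q) (x : ℝ) (k : ℕ) :
    gaussQ q x k = gaussBinom (q ^ 2) (q ^ (2 * x)) k := by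
  simp_rw [gaussQ, gaussBinom, qSubPow, prod_div_distrib, rpow_two_mul_natCast hq, mul_one]

lemma injective_sq_pow (hq : 0 < q) (hq₁ : q ≠ 1) :
    Function.Injective ((q ^ 2) ^ · : ℕ → ℝ) :=
  pow_right_injective₀ (by positivity) ((pow_eq_one_iff_of_nonneg hq.le two_ne_zero).not.2 hq₁)

lemma gaussQ_natCast_sub_symm (hq : 0 < q) (hq₁ : q ≠ 1) {j k n : ℕ} (hjk : j ≤ k) (hkn : k ≤ n) :
    gaussQ q ((n : ℝ) - j) (n - k) = gaussQ q ((n : ℝ) - j) (k - j) := by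
  have h := gaussBinom_pow_add_symm (injective_sq_pow hq hq₁) (n - k) (k - j)
  rw [Nat.sub_add_sub_cancel hkn hjk] at h
  rw [← Nat.cast_sub (hjk.trans hkn), gaussQ_eq_gaussBinom hq, gaussQ_eq_gaussBinom hq,
    rpow_two_mul_natCast hq, h]

theorem stmt3_general (hq : 0 < q) (hq₁ : q ≠ 1) (m x : ℝ) {n k : ℕ} (hk : k ≤ n) :
    ∑ j ∈ range (k + 1), (-1 : ℝ) ^ j * q ^ (2 * (j : ℝ) * (n - x)) * q ^ (j * (j - 1)) *
        gaussQ q x j * gaussQ q (n - x) (k - j) * skewGamma q (m - 2 * j) (k - j)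
      = ∑ j ∈ range (k + 1), (-1 : ℝ) ^ (k - j) * q ^ ((k - j) * (k - j - 1)) *
          gaussQ q (n - j) (n - k) * gaussQ q (n - x) j * q ^ (j * m) := by
  have h := krawtchouk_eq_generalisedKrawtchouk (injective_sq_pow hq hq₁)
    (q ^ (2 * x)) (q ^ (2 * (n - x))) (q ^ m) k
  rw [← Real.rpow_add hq, Nat.sum_antidiagonal_eq_sum_range_succ_mk,
    Nat.sum_antidiagonal_eq_sum_range_succ_mk] at h
  convert h using 2 with j _ j hj
  · rw [qSubPow_sq_zero_one, gaussQ_eq_gaussBinom hq, gaussQ_eq_gaussBinom hq,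
      skewGamma_eq_qSubPow hq, Real.rpow_sub hq, rpow_two_mul_natCast hq,
      ← Real.rpow_mul_natCast hq.le]
    ring_nf
  · rw [gaussQ_natCast_sub_symm hq hq₁ (Nat.lt_succ_iff.1 (mem_range.1 hj)) hk, qSubPow_sq_zero_one,
      gaussQ_eq_gaussBinom hq, gaussQ_eq_gaussBinom hq, ← rpow_two_mul_natCast hq,
      ← Real.rpow_sub hq, mul_comm (j : ℝ) m, Real.rpow_mul_natCast hq.le]
    ring_nf

end Real

theorem stmt3 (q : ℝ) (hq : 1 < q) (m : ℝ) (n x k : ℕ) (hx : x ≤ n) (hk : k ≤ n) :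
    (∑ j ∈ Finset.range (k + 1),
        (-1 : ℝ) ^ j * q ^ (2 * j * (n - x)) * q ^ (j * (j - 1)) *
          gaussQ q (x : ℝ) j * gaussQ q ((n : ℝ) - (x : ℝ)) (k - j) *
          skewGamma q (m - 2 * (j : ℝ)) (k - j))
      = ∑ j ∈ Finset.range (k + 1),
          (-1 : ℝ) ^ (k - j) * q ^ ((k - j) * (k - j - 1)) *
            gaussQ q ((n : ℝ) - (j : ℝ)) (n - k) * gaussQ q ((n : ℝ) - (x : ℝ)) j *
            q ^ ((j : ℝ) * m) := by
  have h := stmt3_general (zero_lt_one.trans hq) hq.ne' m x hk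
  simpa only [← Nat.cast_sub hx, ← Nat.cast_ofNat (R := ℝ), ← Nat.cast_mul, Real.rpow_natCast]
    using h
end

section
/- Let q > 1 be real, s a natural number, g_0, …, g_s real numbers, X a fixed real number, and φ ≤ s a natural number. Then for every Y ≠ 0, the φ-fold skew-q^{-1}-derivative with respect to Y satisfies (Y ↦ Σ_{i=0}^{s} g_i Y^i X^{s−i})^{{φ}}(Y) = Σ_{i=φ}^{s} g_i q^{2(φ(1−i)+σ_φ)} β(i,φ) Y^{i−φ} X^{s−i}. In particular, for φ ≤ ℓ, (Y ↦ Y^ℓ)^{{φ}}(Y) = q^{2(φ(1−ℓ)+σ_φ)} β(ℓ,φ) Y^{ℓ−φ}. -/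
/-- The skew-q-nary Beta function `β(x,k)`. -/
noncomputable def betaQ (q x : ℝ) (k : ℕ) : ℝ :=
  ∏ i ∈ Finset.range k, (q ^ (2 * (x - (i : ℝ))) - 1) / (q ^ 2 - 1)

/-- The skew-q⁻¹-derivative operator. -/
noncomputable def qInvDeriv (q : ℝ) (h : ℝ → ℝ) : ℝ → ℝ :=
  fun Y => (h ((q ^ 2)⁻¹ * Y) - h Y) / (((q ^ 2)⁻¹ - 1) * Y)

/-
On the monomial `Y ^ m`, with `m` any integer, the operator acts by
`Y ^ m ↦ q ^ (2 * (1 - m)) * ((q ^ (2 * m) - 1) / (q ^ 2 - 1)) * Y ^ (m - 1)`.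
Iterating, the fractions multiply to `β(m, n)`, while the exponents `2 * (1 - (m - k))` for `k < n`
add up to `2 * (n * (1 - m) + σ_n)`. At `Y = 0` the operator returns the junk value `0`, so iterates
are compared only on `{0}ᶜ`, which is stable under scaling by `q ^ (-2)`. Linearity extends the
formula to polynomials, and the monomials of degree less than `φ` disappear because `β(l, φ) = 0`
for natural numbers `l < φ`.
-/

theorem betaQ_intCast_succ (q : ℝ) (m : ℤ) (k : ℕ) :
    betaQ q m (k + 1) = betaQ q m k * ((q ^ (2 * (m - k)) - 1) / (q ^ 2 - 1)) := by
  have hpow : q ^ (2 * ((m : ℝ) - (k : ℝ))) = q ^ (2 * (m - k)) := by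
    rw [← Real.rpow_intCast]
    push_cast
    rfl
  rw [← hpow]
  exact Finset.prod_range_succ _ k

theorem betaQ_natCast_eq_zero (q : ℝ) {l k : ℕ} (h : l < k) : betaQ q l k = 0 :=
  Finset.prod_eq_zero (Finset.mem_range.2 h) (by simp)

theorem isLinearMap_qInvDeriv (q : ℝ) : IsLinearMap ℝ (qInvDeriv q) where
  map_add f h := by
    funext Y
    simp only [qInvDeriv, Pi.add_apply]
    ring
  map_smul c f := by
    funext Y
    simp only [qInvDeriv, Pi.smul_apply, smul_eq_mul]
    ring

theorem iterate_qInvDeriv_sum_smul {ι : Type*} (q : ℝ) (n : ℕ) (t : Finset ι) (c : ι → ℝ)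
    (f : ι → ℝ → ℝ) :
    (qInvDeriv q)^[n] (∑ i ∈ t, c i • f i) = ∑ i ∈ t, c i • (qInvDeriv q)^[n] (f i) := by
  have hiterate : ⇑((isLinearMap_qInvDeriv q).mk' ^ n) = (qInvDeriv q)^[n] :=
    Module.End.coe_pow _ n
  simp only [← hiterate, map_sum, map_smul]

theorem qInvDeriv_eqOn {q : ℝ} (hq : q ≠ 0) {f h : ℝ → ℝ} (hfh : Set.EqOn f h {0}ᶜ) :
    Set.EqOn (qInvDeriv q f) (qInvDeriv q h) {0}ᶜ := by
  intro Y hY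
  have hqY : (q ^ 2)⁻¹ * Y ∈ ({0}ᶜ : Set ℝ) := mul_ne_zero (inv_ne_zero (pow_ne_zero 2 hq)) hY
  simp only [qInvDeriv, hfh hY, hfh hqY]

theorem qInvDeriv_zpow {q : ℝ} (hq : q ≠ 0) (hq2 : q ^ 2 ≠ 1) (m : ℤ) {Y : ℝ} (hY : Y ≠ 0) :
    qInvDeriv q (fun Z => Z ^ m) Y
      = q ^ (2 * (1 - m)) * ((q ^ (2 * m) - 1) / (q ^ 2 - 1)) * Y ^ (m - 1) := by
  have hsub : q ^ 2 - 1 ≠ 0 := sub_ne_zero.2 hq2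
  have hsub' : 1 - q ^ 2 ≠ 0 := sub_ne_zero.2 hq2.symm
  have hden : (q ^ 2)⁻¹ - 1 = (1 - q ^ 2) / q ^ 2 := by field_simp
  have hscale : ((q ^ 2)⁻¹ * Y) ^ m = (q ^ (2 * m))⁻¹ * Y ^ m := by
    rw [mul_zpow, inv_zpow, zpow_mul, zpow_ofNat]
  have hcoeff : q ^ (2 * (1 - m)) = q ^ 2 * (q ^ (2 * m))⁻¹ := by
    rw [mul_sub, mul_one, zpow_sub₀ hq, zpow_ofNat, div_eq_mul_inv]
  rw [qInvDeriv, hden, hscale, hcoeff, zpow_sub_one₀ hY]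
  field_simp
  ring

theorem iterate_qInvDeriv_zpow {q : ℝ} (hq : q ≠ 0) (hq2 : q ^ 2 ≠ 1) (m : ℤ) (n : ℕ) :
    Set.EqOn ((qInvDeriv q)^[n] (fun Z => Z ^ m))
      (fun Z => q ^ (2 * n * (1 - m) + n * (n - 1)) * betaQ q m n * Z ^ (m - n)) {0}ᶜ := by
  induction n with
  | zero => intro Y _; simp [betaQ]
  | succ n ih =>
    intro Y hY
    have hexp : q ^ (2 * n * (1 - m) + n * (n - 1)) * q ^ (2 * (1 - (m - n)))
        = q ^ (2 * (n + 1 : ℕ) * (1 - m) + (n + 1 : ℕ) * ((n + 1 : ℕ) - 1)) := by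
      rw [← zpow_add₀ hq]
      congr 1
      push_cast
      ring
    have hdeg : m - n - 1 = m - (n + 1 : ℕ) := by
      push_cast
      ring
    set C := q ^ (2 * n * (1 - m) + n * (n - 1)) * betaQ q m n with hC
    calc (qInvDeriv q)^[n + 1] (fun Z => Z ^ m) Y
        = qInvDeriv q ((qInvDeriv q)^[n] (fun Z => Z ^ m)) Y := by
          rw [Function.iterate_succ_apply']
      _ = qInvDeriv q (C • fun Z => Z ^ (m - n)) Y := qInvDeriv_eqOn hq ih hY
      _ = C * qInvDeriv q (fun Z => Z ^ (m - n)) Y :=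
          congrFun ((isLinearMap_qInvDeriv q).map_smul C _) Y
      _ = C * (q ^ (2 * (1 - (m - n))) * ((q ^ (2 * (m - n)) - 1) / (q ^ 2 - 1))
            * Y ^ (m - n - 1)) := by
          rw [qInvDeriv_zpow hq hq2 _ hY]
      _ = _ := by
          rw [← hexp, ← hdeg, betaQ_intCast_succ, hC]
          ring

theorem iterate_qInvDeriv_pow {q : ℝ} (hq : q ≠ 0) (hq2 : q ^ 2 ≠ 1) {l n : ℕ} (hn : n ≤ l)
    {Y : ℝ} (hY : Y ≠ 0) :
    (qInvDeriv q)^[n] (fun Z => Z ^ l) Y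
      = q ^ (2 * ((n : ℝ) * (1 - (l : ℝ)) + (n : ℝ) * ((n : ℝ) - 1) / 2)) *
          betaQ q l n * Y ^ (l - n) := by
  -- The real exponent is an integer, so `rpow` agrees with `zpow` even when `q` is negative.
  have hrpow : q ^ (2 * ((n : ℝ) * (1 - (l : ℝ)) + (n : ℝ) * ((n : ℝ) - 1) / 2))
      = q ^ (2 * n * (1 - l) + n * (n - 1) : ℤ) := by
    rw [← Real.rpow_intCast]
    congr 1
    push_cast
    ring
  have hdeg : Y ^ (l - n) = Y ^ ((l : ℤ) - n) := by
    rw [← Nat.cast_sub hn, zpow_natCast]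
  rw [hrpow, hdeg]
  simpa only [zpow_natCast, Int.cast_natCast] using iterate_qInvDeriv_zpow hq hq2 l n hY

theorem iterate_qInvDeriv_pow_eq_zero {q : ℝ} (hq : q ≠ 0) (hq2 : q ^ 2 ≠ 1) {l n : ℕ}
    (hn : l < n) {Y : ℝ} (hY : Y ≠ 0) : (qInvDeriv q)^[n] (fun Z => Z ^ l) Y = 0 := by
  simpa only [zpow_natCast, Int.cast_natCast, betaQ_natCast_eq_zero q hn, mul_zero, zero_mul]
    using iterate_qInvDeriv_zpow hq hq2 l n hY

theorem stmt7_general (q : ℝ) (hq : q ≠ 0) (hq2 : q ^ 2 ≠ 1) (s : ℕ) (g : ℕ → ℝ) (X : ℝ)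
    (φ : ℕ) :
    (∀ Y : ℝ, Y ≠ 0 →
      ((qInvDeriv q)^[φ] (fun Z => ∑ i ∈ Finset.range (s + 1), g i * Z ^ i * X ^ (s - i))) Y
        = ∑ i ∈ Finset.Icc φ s,
            g i * q ^ (2 * ((φ : ℝ) * (1 - (i : ℝ)) + (φ : ℝ) * ((φ : ℝ) - 1) / 2)) *
              betaQ q (i : ℝ) φ * Y ^ (i - φ) * X ^ (s - i))
    ∧ (∀ ℓ : ℕ, φ ≤ ℓ → ∀ Y : ℝ, Y ≠ 0 →
        ((qInvDeriv q)^[φ] (fun Z => Z ^ ℓ)) Y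
          = q ^ (2 * ((φ : ℝ) * (1 - (ℓ : ℝ)) + (φ : ℝ) * ((φ : ℝ) - 1) / 2)) *
              betaQ q (ℓ : ℝ) φ * Y ^ (ℓ - φ)) := by
  refine ⟨fun Y hY => ?_, fun ℓ hℓ Y hY => iterate_qInvDeriv_pow hq hq2 hℓ hY⟩
  have hpoly : (fun Z : ℝ => ∑ i ∈ Finset.range (s + 1), g i * Z ^ i * X ^ (s - i))
      = ∑ i ∈ Finset.range (s + 1), (g i * X ^ (s - i)) • fun Z : ℝ => Z ^ i := by
    funext Z
    simp only [Finset.sum_apply, Pi.smul_apply, smul_eq_mul, mul_right_comm]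
  have hsubset : Finset.Icc φ s ⊆ Finset.range (s + 1) := fun i hi =>
    Finset.mem_range_succ_iff.2 (Finset.mem_Icc.1 hi).2
  rw [hpoly, iterate_qInvDeriv_sum_smul, Finset.sum_apply]
  refine (Finset.sum_subset_zero_on_sdiff hsubset (fun i hi => ?_) fun i hi => ?_).symm
  · have hlt : i < φ := by
      simp only [Finset.mem_sdiff, Finset.mem_range, Finset.mem_Icc] at hi
      omega
    rw [Pi.smul_apply, iterate_qInvDeriv_pow_eq_zero hq hq2 hlt hY, smul_zero]
  · rw [Pi.smul_apply, iterate_qInvDeriv_pow hq hq2 (Finset.mem_Icc.1 hi).1 hY, smul_eq_mul]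
    ring

theorem stmt7 (q : ℝ) (hq : 1 < q) (s : ℕ) (g : ℕ → ℝ) (X : ℝ) (φ : ℕ) (hφ : φ ≤ s) :
    (∀ Y : ℝ, Y ≠ 0 →
      ((qInvDeriv q)^[φ] (fun Z => ∑ i ∈ Finset.range (s + 1), g i * Z ^ i * X ^ (s - i))) Y
        = ∑ i ∈ Finset.Icc φ s,
            g i * q ^ (2 * ((φ : ℝ) * (1 - (i : ℝ)) + (φ : ℝ) * ((φ : ℝ) - 1) / 2)) *
              betaQ q (i : ℝ) φ * Y ^ (i - φ) * X ^ (s - i))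
    ∧ (∀ ℓ : ℕ, φ ≤ ℓ → ∀ Y : ℝ, Y ≠ 0 →
        ((qInvDeriv q)^[φ] (fun Z => Z ^ ℓ)) Y
          = q ^ (2 * ((φ : ℝ) * (1 - (ℓ : ℝ)) + (φ : ℝ) * ((φ : ℝ) - 1) / 2)) *
              betaQ q (ℓ : ℝ) φ * Y ^ (ℓ - φ)) :=
  stmt7_general q (zero_lt_one.trans hq).ne' (one_lt_pow₀ hq two_ne_zero).ne' s g X φ
end
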